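/- arXiv:2104.06302 — 2 statements merged into one kernel-verified Lean document; each statement's English description precedes it below -/
import Mathlib

section
/- Let σ be a saturation function, S its modified saturation function, and f the associated vector field on ℝ². Then f is bounded, of class C¹, and for every z,y∈ℝ² one has ⟨y, f(z+y) − f(z)⟩ ≥ 0, with equality if and only if y = 0. -/
open Real Filter MeasureTheory intervalIntegral RealInnerProductSpace

noncomputable section

/-- A saturation function: odd, globally Lipschitz, sign-definite, with finite positive limits
of `σ` at `+∞` and of `σ ξ / ξ` at `0`, non-decreasing, differentiable on `(0,∞)` with
non-increasing derivative there. -/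
def IsSaturation (σ : ℝ → ℝ) : Prop :=
  (∀ ξ, σ (-ξ) = -σ ξ) ∧
  (∃ L : NNReal, LipschitzWith L σ) ∧
  (∀ ξ : ℝ, ξ ≠ 0 → σ ξ * ξ > 0) ∧
  (∃ l > 0, Tendsto σ atTop (nhds l)) ∧
  (∃ l > 0, Tendsto (fun ξ => σ ξ / ξ) (nhdsWithin 0 {(0:ℝ)}ᶜ) (nhds l)) ∧
  Monotone σ ∧
  DifferentiableOn ℝ σ (Set.Ioi 0) ∧
  AntitoneOn (deriv σ) (Set.Ioi 0)

/-- The modified saturation function `S` associated with `σ`: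
`S ξ = (2/π) ∫_0^{π/2} sin v · σ(ξ sin v) dv`. -/
def modSat (σ : ℝ → ℝ) (ξ : ℝ) : ℝ :=
  (2 / Real.pi) * ∫ v in (0:ℝ)..(Real.pi / 2), Real.sin v * σ (ξ * Real.sin v)

abbrev E2 := EuclideanSpace ℝ (Fin 2)

open Classical in
/-- The radial vector field `f(z) = S(‖z‖) z / ‖z‖`, `f(0) = 0`. -/
def fvec (σ : ℝ → ℝ) (z : E2) : E2 :=
  if z = 0 then 0 else (modSat σ ‖z‖ / ‖z‖) • z

/-!
With `u θ` the unit vector of polar angle `θ`, the field is an average of plane waves,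
`f z = (2π)⁻¹ ∫ σ(⟪u θ, z⟫) u θ dθ` over a full turn: for `z = r u φ`, rotating `θ` makes the
component along `u φ` the integral defining `S r`, while the orthogonal component vanishes.
Smoothness and boundedness of `f` are then inherited from `σ`, and
`⟪y, f (z + y) - f z⟫` is the average of `⟪u θ, y⟫ (σ ⟪u θ, z + y⟫ - σ ⟪u θ, z⟫)`, which is
nonnegative because `σ` is monotone. It is positive for some `θ` when `y ≠ 0`: choose `u θ` almost
orthogonal to `z` but not orthogonal to `y`, so that `σ` has positive slope at `⟪u θ, z⟫`.
-/

open Set Topology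

lemma sub_mul_sub_pos_of_monotone_of_deriv_ne_zero {σ : ℝ → ℝ} (hσ : Monotone σ) {a b : ℝ}
    (hab : a ≠ b) (ha : deriv σ a ≠ 0) : 0 < (b - a) * (σ b - σ a) := by
  have hne : σ b - σ a ≠ 0 := by
    intro h
    have hconst : ∀ x ∈ uIcc a b, σ x = σ a := fun x hx => by
      simpa [sub_eq_zero.1 h] using hσ.mapsTo_uIcc hx
    have hderiv : HasDerivWithinAt σ (deriv σ a) (uIcc a b) a :=
      (differentiableAt_of_deriv_ne_zero ha).hasDerivAt.hasDerivWithinAt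
    have huniq : UniqueDiffWithinAt ℝ (uIcc a b) a :=
      uniqueDiffOn_Icc (inf_lt_sup.2 hab) a left_mem_uIcc
    exact ha (huniq.eq_deriv _ hderiv ((hasDerivWithinAt_const a _ (σ a)).congr_of_mem hconst
      left_mem_uIcc))
  exact (monovary_iff_forall_mul_nonneg.1 (monotone_id.monovary hσ) a b).lt_of_ne'
    (mul_ne_zero (sub_ne_zero.2 hab.symm) hne)

-- By Darboux's theorem the derivative maps `s` onto an order-connected set, and a monotone map onto
-- an order-connected set has no jumps.
lemma continuousOn_deriv_of_concaveOn {f : ℝ → ℝ} {s : Set ℝ} (hf : ConcaveOn ℝ s f)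
    (hd : ∀ x ∈ s, DifferentiableAt ℝ f x) : ContinuousOn (deriv f) s := by
  have : OrdConnected s := hf.1.ordConnected
  have : OrdConnected ((fun x => -deriv f x) '' s) := by
    simpa using this.image_deriv (f := fun x => -f x) fun x hx => (hd x hx).neg
  let g : s → (fun x => -deriv f x) '' s := imageFactorization _ s
  have hg : Monotone g := fun x y hxy =>
    neg_le_neg (hf.antitoneOn_deriv hd x.2 y.2 hxy)
  have hcont : Continuous g := hg.continuous_of_surjective imageFactorization_surjective
  exact continuousOn_iff_continuous_domRestrict.2
    ((continuous_subtype_val.comp hcont).neg.congr fun _ => neg_neg _)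

lemma even_deriv_of_odd {f : ℝ → ℝ} (hf : Function.Odd f) : Function.Even (deriv f) := fun x => by
  have h : deriv (fun y => f (-y)) x = deriv (fun y => -f y) x := by simp only [hf _]
  simpa [deriv_comp_neg] using h

lemma contDiff_one_intervalIntegral {E F : Type*} [NormedAddCommGroup E] [NormedSpace ℝ E]
    [NormedAddCommGroup F] [NormedSpace ℝ F] {f : E → ℝ → F} {f' : E → ℝ → E →L[ℝ] F}
    (hf : ∀ z, Continuous (f z)) (hf' : Continuous f'.uncurry)
    (hd : ∀ z t, HasFDerivAt (fun x => f x t) (f' z t) z) (a b : ℝ) :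
    ContDiff ℝ 1 fun z => ∫ t in a..b, f z t := by
  refine contDiff_one_iff_hasFDerivAt.2
    ⟨fun z => ∫ t in a..b, f' z t, by fun_prop, fun z => ?_⟩
  have hz : Continuous (f' z) := hf'.uncurry_left z
  obtain ⟨C, hC⟩ := isCompact_uIcc.exists_bound_of_continuousOn (hz.continuousOn (s := uIcc a b))
  have hbound : ∀ᶠ x in 𝓝 z, ∀ t ∈ uIcc a b, ‖f' x t‖ < C + 1 :=
    isCompact_uIcc.eventually_forall_of_forall_eventually fun t ht =>
      hf'.norm.continuousAt.eventually_lt_const ((hC t ht).trans_lt (lt_add_one C))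
  exact hasFDerivAt_integral_of_dominated_of_fderiv_le (bound := fun _ => C + 1) hbound
    (.of_forall fun x => (hf x).aestronglyMeasurable) ((hf z).intervalIntegrable _ _)
    hz.aestronglyMeasurable
    (.of_forall fun t ht x hx => (hx t (uIoc_subset_uIcc ht)).le)
    intervalIntegrable_const (.of_forall fun t _ x _ => hd x t)

lemma integral_zero_two_mul_of_reflect {g : ℝ → ℝ} (hg : Continuous g) {c : ℝ}
    (hsymm : ∀ x, g (2 * c - x) = g x) : ∫ x in 0..2 * c, g x = 2 * ∫ x in 0..c, g x := by
  have hright : ∫ x in c..2 * c, g x = ∫ x in 0..c, g x := by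
    have h := intervalIntegral.integral_comp_sub_left (a := 0) (b := c) g (2 * c)
    simp only [hsymm, sub_zero] at h
    rw [h, two_mul, add_sub_cancel_right]
  rw [← integral_add_adjacent_intervals (hg.intervalIntegrable 0 c)
    (hg.intervalIntegrable c (2 * c)), hright, two_mul]

section RidgeField

variable {E : Type*} [NormedAddCommGroup E] [InnerProductSpace ℝ E] {σ : ℝ → ℝ} {u : ℝ → E}

/-- The superposition, over the directions `u θ` with `θ` between `a` and `b`, of the ridge vector
fields `z ↦ σ(⟪u θ, z⟫) u θ`. Each of these is monotone when `σ` is. -/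
def ridgeField (σ : ℝ → ℝ) (u : ℝ → E) (a b : ℝ) (z : E) : E :=
  ∫ θ in a..b, σ ⟪u θ, z⟫ • u θ

lemma contDiff_ridgeField (hσ : ContDiff ℝ 1 σ) (hu : Continuous u) (a b : ℝ) :
    ContDiff ℝ 1 (ridgeField σ u a b) := by
  have : Continuous (deriv σ) := hσ.continuous_deriv_one
  refine contDiff_one_intervalIntegral
    (f' := fun z θ => (deriv σ ⟪u θ, z⟫ • innerSL ℝ (u θ)).smulRight (u θ))
    (fun z => ?_) ?_ (fun z θ => ?_) a b
  · have := hσ.continuous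
    fun_prop
  · simp only [Function.uncurry_def]
    fun_prop
  · exact ((hσ.differentiable_one _).hasDerivAt.comp_hasFDerivAt z
      (innerSL ℝ (u θ)).hasFDerivAt).smul_const (u θ)

lemma norm_ridgeField_le {M : ℝ} (hσ : ∀ x, |σ x| ≤ M) (hu : ∀ θ, ‖u θ‖ = 1) (a b : ℝ) (z : E) :
    ‖ridgeField σ u a b z‖ ≤ M * |b - a| :=
  norm_integral_le_of_norm_le_const fun θ _ => by
    rw [norm_smul, hu, mul_one]
    exact hσ _

lemma inner_ridgeField_sub [CompleteSpace E] (hσ : Continuous σ) (hu : Continuous u) (a b : ℝ)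
    (w z y : E) :
    ⟪y, ridgeField σ u a b w - ridgeField σ u a b z⟫ =
      ∫ θ in a..b, ⟪u θ, y⟫ * (σ ⟪u θ, w⟫ - σ ⟪u θ, z⟫) := by
  have hint : ∀ x : E, IntervalIntegrable (fun θ => σ ⟪u θ, x⟫ • u θ) volume a b := fun x =>
    Continuous.intervalIntegrable (by fun_prop) a b
  rw [ridgeField, ridgeField, ← integral_sub (hint w) (hint z), ← innerSL_apply_apply ℝ,
    ← (innerSL ℝ y).intervalIntegral_comp_comm ((hint w).sub (hint z))]
  refine integral_congr fun θ _ => ?_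
  simp only [← sub_smul, innerSL_apply_apply, inner_smul_right, real_inner_comm y, mul_comm]

lemma inner_ridgeField_add_sub_pos [CompleteSpace E] (hmono : Monotone σ) (hσ : Continuous σ)
    (hu : Continuous u) {a b : ℝ} (hab : a < b) {z y : E}
    (hdir : ∃ θ ∈ Icc a b, deriv σ ⟪u θ, z⟫ ≠ 0 ∧ ⟪u θ, y⟫ ≠ 0) :
    0 < ⟪y, ridgeField σ u a b (z + y) - ridgeField σ u a b z⟫ := by
  have hsub : ∀ θ, ⟪u θ, y⟫ = ⟪u θ, z + y⟫ - ⟪u θ, z⟫ := fun θ => by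
    rw [inner_add_right, add_sub_cancel_left]
  rw [inner_ridgeField_sub hσ hu]
  refine integral_pos hab (by fun_prop) (fun θ _ => ?_) ?_
  · rw [hsub]
    exact monovary_iff_forall_mul_nonneg.1 (monotone_id.monovary hmono) _ _
  · obtain ⟨θ, hθ, hderiv, hy⟩ := hdir
    rw [hsub, sub_ne_zero] at hy
    refine ⟨θ, hθ, ?_⟩
    rw [hsub]
    exact sub_mul_sub_pos_of_monotone_of_deriv_ne_zero hmono hy.symm hderiv

end RidgeField

/-- The unit vector of the Euclidean plane with polar angle `θ`. -/
def unitVec (θ : ℝ) : E2 := !₂[cos θ, sin θ]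

lemma continuous_unitVec : Continuous unitVec := by
  unfold unitVec
  fun_prop

lemma norm_unitVec (θ : ℝ) : ‖unitVec θ‖ = 1 := by
  simp [unitVec, EuclideanSpace.norm_eq]

lemma unitVec_periodic : Function.Periodic unitVec (2 * π) := fun θ => by
  simp [unitVec]

lemma inner_unitVec (θ : ℝ) (z : E2) : ⟪unitVec θ, z⟫ = cos θ * z 0 + sin θ * z 1 := by
  simp [unitVec, PiLp.inner_apply, Fin.sum_univ_two, mul_comm]

lemma inner_unitVec_unitVec (θ φ : ℝ) : ⟪unitVec θ, unitVec φ⟫ = cos (θ - φ) := by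
  rw [inner_unitVec, cos_sub]
  rfl

lemma unitVec_add (θ φ : ℝ) :
    unitVec (θ + φ) = cos θ • unitVec φ + sin θ • unitVec (φ + π / 2) := by
  ext i
  fin_cases i <;> simp [unitVec, cos_add, sin_add] <;> ring

lemma exists_eq_norm_smul_unitVec (z : E2) : ∃ φ, z = ‖z‖ • unitVec φ := by
  have hnorm : ‖z‖ = ‖(⟨z 0, z 1⟩ : ℂ)‖ := by
    simp [EuclideanSpace.norm_eq, Complex.norm_eq_sqrt_sq_add_sq]
  refine ⟨Complex.arg ⟨z 0, z 1⟩, ?_⟩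
  ext i
  fin_cases i <;> simp [unitVec, hnorm, Complex.norm_mul_cos_arg, Complex.norm_mul_sin_arg]

lemma hasDerivAt_inner_unitVec (θ : ℝ) (y : E2) :
    HasDerivAt (fun t => ⟪unitVec t, y⟫) ⟪unitVec (θ + π / 2), y⟫ θ := by
  simp only [inner_unitVec, cos_add_pi_div_two, sin_add_pi_div_two]
  exact ((hasDerivAt_cos θ).mul_const _).add ((hasDerivAt_sin θ).mul_const _)

lemma eventually_inner_unitVec_ne_zero {y : E2} (hy : y ≠ 0) (θ : ℝ) :
    ∀ᶠ t in 𝓝[≠] θ, ⟪unitVec t, y⟫ ≠ 0 := by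
  obtain ⟨φ, hφ⟩ := exists_eq_norm_smul_unitVec y
  by_cases h : ⟪unitVec θ, y⟫ = 0
  · refine (hasDerivAt_inner_unitVec θ y).eventually_ne fun h' => ?_
    rw [hφ, inner_smul_right, inner_unitVec_unitVec] at h h'
    have hcos := (mul_eq_zero.1 h).resolve_left (norm_ne_zero_iff.2 hy)
    have hsin := (mul_eq_zero.1 h').resolve_left (norm_ne_zero_iff.2 hy)
    rw [add_sub_right_comm, cos_add_pi_div_two, neg_eq_zero] at hsin
    simpa [hcos, hsin] using sin_sq_add_cos_sq (θ - φ)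
  · exact nhdsWithin_le_nhds ((hasDerivAt_inner_unitVec θ y).continuousAt.eventually_ne h)

lemma exists_inner_unitVec_mem_and_ne_zero {s : Set ℝ} (hs : s ∈ 𝓝 0) (z : E2) {y : E2}
    (hy : y ≠ 0) : ∃ θ ∈ Icc 0 (2 * π), ⟪unitVec θ, z⟫ ∈ s ∧ ⟪unitVec θ, y⟫ ≠ 0 := by
  obtain ⟨φ, hφ⟩ := exists_eq_norm_smul_unitVec z
  have hperp : ⟪unitVec (φ + π / 2), z⟫ = 0 := by
    rw [hφ, inner_smul_right, inner_unitVec_unitVec, add_sub_cancel_left, cos_pi_div_two, mul_zero]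
  rw [← hperp] at hs
  have hnear : ∀ᶠ t in 𝓝[≠] (φ + π / 2), ⟪unitVec t, z⟫ ∈ s :=
    nhdsWithin_le_nhds ((hasDerivAt_inner_unitVec _ z).continuousAt.eventually hs)
  obtain ⟨t, htz, hty⟩ := (hnear.and (eventually_inner_unitVec_ne_zero hy _)).exists
  obtain ⟨θ, hθ, heq⟩ := unitVec_periodic.exists_mem_Ico₀ two_pi_pos t
  exact ⟨θ, Ico_subset_Icc_self hθ, heq ▸ htz, heq ▸ hty⟩

lemma integral_sin_mul_comp_sin {σ : ℝ → ℝ} (hσ : Continuous σ) (hodd : Function.Odd σ) (r : ℝ) :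
    ∫ θ in 0..2 * π, sin θ * σ (r * sin θ) = 2 * π * modSat σ r := by
  have hcont : Continuous fun θ => sin θ * σ (r * sin θ) := by fun_prop
  have hhalf : ∫ θ in 0..2 * π, sin θ * σ (r * sin θ) =
      2 * ∫ θ in 0..π, sin θ * σ (r * sin θ) :=
    integral_zero_two_mul_of_reflect hcont fun θ => by
      rw [sin_two_pi_sub, mul_neg, hodd, neg_mul_neg]
  have hquarter : ∫ θ in 0..π, sin θ * σ (r * sin θ) =
      2 * ∫ θ in 0..π / 2, sin θ * σ (r * sin θ) := by
    have h := integral_zero_two_mul_of_reflect (c := π / 2) hcont fun θ => by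
      rw [mul_div_cancel₀ _ two_ne_zero, sin_pi_sub]
    rwa [mul_div_cancel₀ _ two_ne_zero] at h
  have hconst : 2 * π * (2 / π) = 2 * 2 := by field_simp
  rw [hhalf, hquarter, modSat, ← mul_assoc, ← mul_assoc, hconst]

lemma integral_cos_mul_comp_sin {σ : ℝ → ℝ} (hσ : Continuous σ) (r : ℝ) :
    ∫ θ in 0..2 * π, cos θ * σ (r * sin θ) = 0 := by
  have h := integral_comp_mul_deriv (a := 0) (b := 2 * π) (g := fun s => σ (r * s))
    (fun x _ => hasDerivAt_sin x) continuous_cos.continuousOn (by fun_prop)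
  rw [sin_zero, sin_two_pi, integral_same] at h
  simpa only [Function.comp_apply, mul_comm] using h

lemma ridgeField_smul_unitVec {σ : ℝ → ℝ} (hσ : Continuous σ) (hodd : Function.Odd σ) (r φ : ℝ) :
    ridgeField σ unitVec 0 (2 * π) (r • unitVec φ) = (2 * π * modSat σ r) • unitVec φ := by
  have hperiodic : Function.Periodic (fun θ => σ ⟪unitVec θ, r • unitVec φ⟫ • unitVec θ)
      (2 * π) := fun θ => by simp only [unitVec_periodic θ]
  have hrotate : ∀ θ, σ ⟪unitVec (θ + (φ - π / 2)), r • unitVec φ⟫ • unitVec (θ + (φ - π / 2)) =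
      (sin θ * σ (r * sin θ)) • unitVec φ +
        (cos θ * σ (r * sin θ)) • unitVec (φ - π / 2) := fun θ => by
    rw [inner_smul_right, inner_unitVec_unitVec, add_sub_assoc, sub_sub_cancel_left,
      ← sub_eq_add_neg, cos_sub_pi_div_two, unitVec_add, sub_add_cancel]
    module
  calc ridgeField σ unitVec 0 (2 * π) (r • unitVec φ)
      = ∫ θ in 0..2 * π,
          σ ⟪unitVec (θ + (φ - π / 2)), r • unitVec φ⟫ • unitVec (θ + (φ - π / 2)) := by
        rw [intervalIntegral.integral_comp_add_right
          fun θ => σ ⟪unitVec θ, r • unitVec φ⟫ • unitVec θ]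
        simpa [ridgeField, add_comm] using hperiodic.intervalIntegral_add_eq 0 (φ - π / 2)
    _ = (∫ θ in 0..2 * π, sin θ * σ (r * sin θ)) • unitVec φ +
          (∫ θ in 0..2 * π, cos θ * σ (r * sin θ)) • unitVec (φ - π / 2) := by
        simp only [hrotate]
        rw [integral_add (Continuous.intervalIntegrable (by fun_prop) _ _)
          (Continuous.intervalIntegrable (by fun_prop) _ _),
          intervalIntegral.integral_smul_const, intervalIntegral.integral_smul_const]
    _ = (2 * π * modSat σ r) • unitVec φ := by
        rw [integral_sin_mul_comp_sin hσ hodd, integral_cos_mul_comp_sin hσ, zero_smul, add_zero]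

lemma fvec_smul_unitVec {σ : ℝ → ℝ} (hσ : σ 0 = 0) {r : ℝ} (hr : 0 ≤ r) (φ : ℝ) :
    fvec σ (r • unitVec φ) = modSat σ r • unitVec φ := by
  have hnorm : ‖r • unitVec φ‖ = r := by
    rw [norm_smul, norm_unitVec, mul_one, norm_of_nonneg hr]
  rcases hr.eq_or_lt with rfl | hpos
  · simp [fvec, modSat, hσ]
  · rw [fvec, if_neg (norm_ne_zero_iff.1 (hnorm.trans_ne hpos.ne')), hnorm, smul_smul,
      div_mul_cancel₀ _ hpos.ne']

theorem fvec_eq_smul_ridgeField {σ : ℝ → ℝ} (hσ : Continuous σ) (hodd : Function.Odd σ) :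
    fvec σ = fun z => (2 * π)⁻¹ • ridgeField σ unitVec 0 (2 * π) z := by
  funext z
  obtain ⟨φ, hφ⟩ := exists_eq_norm_smul_unitVec z
  rw [hφ, fvec_smul_unitVec hodd.map_zero (norm_nonneg z), ridgeField_smul_unitVec hσ hodd,
    smul_smul, inv_mul_cancel_left₀ two_pi_pos.ne']

namespace IsSaturation

variable {σ : ℝ → ℝ}

lemma odd (hσ : IsSaturation σ) : Function.Odd σ := hσ.1

lemma monotone (hσ : IsSaturation σ) : Monotone σ := hσ.2.2.2.2.2.1

lemma exists_abs_le (hσ : IsSaturation σ) : ∃ M, ∀ x, |σ x| ≤ M := by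
  obtain ⟨l, -, hl⟩ := hσ.2.2.2.1
  have hle : ∀ x, σ x ≤ l := hσ.monotone.ge_of_tendsto hl
  refine ⟨l, fun x => abs_le'.2 ⟨hle x, ?_⟩⟩
  rw [← hσ.odd]
  exact hle (-x)

lemma exists_hasDerivAt_zero (hσ : IsSaturation σ) : ∃ l > 0, HasDerivAt σ l 0 := by
  obtain ⟨l, hpos, hl⟩ := hσ.2.2.2.2.1
  refine ⟨l, hpos, hasDerivAt_iff_tendsto_slope.2 (hl.congr fun x => ?_)⟩
  rw [slope_def_field, hσ.odd.map_zero, sub_zero, sub_zero]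

lemma deriv_zero_ne_zero (hσ : IsSaturation σ) : deriv σ 0 ≠ 0 := by
  obtain ⟨l, hpos, hl⟩ := hσ.exists_hasDerivAt_zero
  exact hl.deriv.trans_ne hpos.ne'

lemma differentiableAt_of_nonneg (hσ : IsSaturation σ) {x : ℝ} (hx : 0 ≤ x) :
    DifferentiableAt ℝ σ x := by
  rcases hx.eq_or_lt with rfl | hpos
  · exact differentiableAt_of_deriv_ne_zero hσ.deriv_zero_ne_zero
  · exact hσ.2.2.2.2.2.2.1.differentiableAt (Ioi_mem_nhds hpos)

lemma differentiable (hσ : IsSaturation σ) : Differentiable ℝ σ := fun x => by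
  rcases le_total 0 x with hx | hx
  · exact hσ.differentiableAt_of_nonneg hx
  · have hneg : DifferentiableAt ℝ (fun y => -σ (-y)) x :=
      ((hσ.differentiableAt_of_nonneg (neg_nonneg.2 hx)).comp x differentiableAt_fun_id.neg).neg
    simpa [hσ.odd _] using hneg

lemma concaveOn (hσ : IsSaturation σ) : ConcaveOn ℝ (Ici 0) σ :=
  AntitoneOn.concaveOn_of_deriv (convex_Ici 0) hσ.differentiable.continuous.continuousOn
    hσ.differentiable.differentiableOn (by simpa using hσ.2.2.2.2.2.2.2)

lemma contDiff (hσ : IsSaturation σ) : ContDiff ℝ 1 σ := by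
  have habs : deriv σ = fun x => deriv σ |x| := funext fun x => by
    rcases abs_choice x with h | h <;> rw [h]
    exact (even_deriv_of_odd hσ.odd x).symm
  refine contDiff_one_iff_deriv.2 ⟨hσ.differentiable, ?_⟩
  rw [habs]
  exact (continuousOn_deriv_of_concaveOn hσ.concaveOn fun x _ =>
    hσ.differentiable x).comp_continuous continuous_abs abs_nonneg

end IsSaturation

theorem inner_fvec_add_sub_pos {σ : ℝ → ℝ} (hσ : ContDiff ℝ 1 σ) (hodd : Function.Odd σ)
    (hmono : Monotone σ) (h0 : deriv σ 0 ≠ 0) (z : E2) {y : E2} (hy : y ≠ 0) :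
    0 < ⟪y, fvec σ (z + y) - fvec σ z⟫ := by
  have hnear : ∀ᶠ t in 𝓝 0, deriv σ t ≠ 0 :=
    hσ.continuous_deriv_one.continuousAt.eventually_ne h0
  rw [fvec_eq_smul_ridgeField hσ.continuous hodd, ← smul_sub, inner_smul_right]
  exact mul_pos (inv_pos.2 two_pi_pos)
    (inner_ridgeField_add_sub_pos hmono hσ.continuous continuous_unitVec two_pi_pos
      (exists_inner_unitVec_mem_and_ne_zero hnear z hy))

theorem stmt6_general (σ : ℝ → ℝ) (hσ : ContDiff ℝ 1 σ) (hodd : Function.Odd σ)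
    (hmono : Monotone σ) (hbdd : ∃ M, ∀ x, |σ x| ≤ M) (h0 : deriv σ 0 ≠ 0) :
    (∃ C : ℝ, ∀ z : E2, ‖fvec σ z‖ ≤ C) ∧
    ContDiff ℝ 1 (fvec σ) ∧
    ∀ z y : E2,
      0 ≤ ⟪y, fvec σ (z + y) - fvec σ z⟫ ∧
      (⟪y, fvec σ (z + y) - fvec σ z⟫ = 0 ↔ y = 0) := by
  have hf := fvec_eq_smul_ridgeField hσ.continuous hodd
  refine ⟨?_, ?_, fun z y => ?_⟩
  · obtain ⟨M, hM⟩ := hbdd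
    refine ⟨‖(2 * π)⁻¹‖ * (M * |2 * π - 0|), fun z => ?_⟩
    rw [hf, norm_smul]
    gcongr
    exact norm_ridgeField_le hM norm_unitVec _ _ z
  · rw [hf]
    exact (contDiff_ridgeField hσ continuous_unitVec _ _).const_smul _
  · rcases eq_or_ne y 0 with rfl | hy
    · simp
    · have hpos := inner_fvec_add_sub_pos hσ hodd hmono h0 z hy
      exact ⟨hpos.le, iff_of_false hpos.ne' hy⟩

/-- `f` is bounded, of class `C¹`, and `⟨y, f(z+y) - f(z)⟩ ≥ 0` with equality iff `y = 0`. -/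
theorem stmt6 (σ : ℝ → ℝ) (hσ : IsSaturation σ) :
    (∃ C : ℝ, ∀ z : E2, ‖fvec σ z‖ ≤ C) ∧
    ContDiff ℝ 1 (fvec σ) ∧
    ∀ z y : E2,
      0 ≤ ⟪y, fvec σ (z + y) - fvec σ z⟫ ∧
      (⟪y, fvec σ (z + y) - fvec σ z⟫ = 0 ↔ y = 0) :=
  stmt6_general σ hσ.contDiff hσ.odd hσ.monotone hσ.exists_abs_le hσ.deriv_zero_ne_zero
end
end

section
/- Let σ be a saturation function, S its modified saturation function, f the associated vector field, and V₀ the function V₀(z,y) = ‖y‖² + ∫₀^{‖z‖} S(ξ)dξ + ∫₀^{‖z−y‖} S(ξ)dξ. Then V₀ is of class C¹, positive definite (V₀(0,0)=0 and V₀(z,y)>0 for (z,y)≠(0,0)), radially unbounded, and along every solution t↦(z(t),y(t)) of (T₀) one has (d/dt)V₀(z(t),y(t)) = −S(‖z(t)‖)² − ⟨y(t), f(z(t)) − f(z(t)−y(t))⟩, which is ≤ 0 and vanishes at time t only if (z(t),y(t)) = (0,0). -/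
open Real Filter MeasureTheory intervalIntegral RealInnerProductSpace

noncomputable section

/-- The Lyapunov function `V₀(z,y) = ‖y‖² + ∫₀^{‖z‖} S + ∫₀^{‖z-y‖} S`. -/
def V0 (σ : ℝ → ℝ) (z y : E2) : ℝ :=
  ‖y‖ ^ 2 + (∫ ξ in (0:ℝ)..‖z‖, modSat σ ξ) + ∫ ξ in (0:ℝ)..‖z - y‖, modSat σ ξ

/-- `(z, y)` solves the limit system `(T₀)`: `ż = y - f(z)`, `ẏ = -f(z)`, for `t ≥ 0`. -/
def IsSolT0 (σ : ℝ → ℝ) (z y : ℝ → E2) : Prop :=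
  ∀ t : ℝ, 0 ≤ t →
    HasDerivAt z (y t - fvec σ (z t)) t ∧ HasDerivAt y (-(fvec σ (z t))) t

/-!
The field `f` is the gradient of the radial potential `Φ(z) = ∫₀^{‖z‖} S`, also at the origin
because `S(0) = 0`. Hence `V₀(z, y) = ‖y‖² + Φ(z) + Φ(z - y)` is `C¹`, and the chain rule gives
`dV₀/dt`. As `S` is nonnegative and non-decreasing on `[0, ∞)`, the field `f` is a monotone
operator; applied to `z` and `z - y`, this says that the cross term `⟪y, f(z) - f(z - y)⟫` is
nonnegative. So `dV₀/dt ≤ 0`, and equality forces `S(‖z‖) = 0`, hence `z = 0`, after which the cross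
term is `S(‖y‖) ‖y‖`.
-/

section ModifiedSaturation

variable {σ : ℝ → ℝ}

theorem continuous_modSat (hcont : Continuous σ) : Continuous (modSat σ) := by
  refine continuous_const.mul (continuous_parametric_intervalIntegral_of_continuous' ?_ _ _)
  simp only [Function.uncurry_def]
  fun_prop

theorem modSat_zero (hzero : σ 0 = 0) : modSat σ 0 = 0 := by
  simp [modSat, hzero]

theorem monotone_modSat (hcont : Continuous σ) (hmono : Monotone σ) : Monotone (modSat σ) := by
  intro a b hab
  have hint (x : ℝ) : IntervalIntegrable (fun v => sin v * σ (x * sin v)) volume 0 (π / 2) :=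
    Continuous.intervalIntegrable (by fun_prop) _ _
  refine mul_le_mul_of_nonneg_left ?_ (by positivity)
  refine integral_mono_on (by positivity) (hint a) (hint b) fun v hv => ?_
  have hsin : 0 ≤ sin v := sin_nonneg_of_nonneg_of_le_pi hv.1 (by linarith [hv.2, pi_pos])
  gcongr
  exact hmono (by gcongr)

theorem modSat_pos (hcont : Continuous σ) (hpos : ∀ ξ, 0 < ξ → 0 < σ ξ) {x : ℝ} (hx : 0 < x) :
    0 < modSat σ x := by
  refine mul_pos (by positivity) (intervalIntegral_pos_of_pos_on
    (Continuous.intervalIntegrable (by fun_prop) _ _) (fun v hv => ?_) (by positivity))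
  have hsin : 0 < sin v := sin_pos_of_pos_of_lt_pi hv.1 (by linarith [hv.2, pi_pos])
  exact mul_pos hsin (hpos _ (mul_pos hx hsin))

end ModifiedSaturation

section PrimitiveOfProfile

variable {φ : ℝ → ℝ}

theorem mul_sub_le_integral (hcont : Continuous φ) (hmono : MonotoneOn φ (Set.Ici 0))
    (hpos : ∀ x, 0 < x → 0 < φ x) {a x : ℝ} (ha : 0 < a) (hax : a ≤ x) :
    φ a * (x - a) ≤ ∫ ξ in (0 : ℝ)..x, φ ξ := by
  have hint (b c : ℝ) : IntervalIntegrable φ volume b c := hcont.intervalIntegrable b c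
  have hfirst : 0 < ∫ ξ in (0 : ℝ)..a, φ ξ :=
    intervalIntegral_pos_of_pos_on (hint 0 a) (fun ξ hξ => hpos ξ hξ.1) ha
  have hrest : ∫ _ in a..x, φ a ≤ ∫ ξ in a..x, φ ξ :=
    integral_mono_on hax intervalIntegrable_const (hint a x) fun ξ hξ =>
      hmono ha.le (ha.le.trans hξ.1) hξ.1
  calc φ a * (x - a) = ∫ _ in a..x, φ a := by
        rw [intervalIntegral.integral_const, smul_eq_mul, mul_comm]
    _ ≤ (∫ ξ in (0 : ℝ)..a, φ ξ) + ∫ ξ in a..x, φ ξ := by linarith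
    _ = ∫ ξ in (0 : ℝ)..x, φ ξ := integral_add_adjacent_intervals (hint 0 a) (hint a x)

theorem tendsto_integral_atTop_of_monotoneOn_of_pos (hcont : Continuous φ)
    (hmono : MonotoneOn φ (Set.Ici 0)) (hpos : ∀ x, 0 < x → 0 < φ x) :
    Tendsto (fun x => ∫ ξ in (0 : ℝ)..x, φ ξ) atTop atTop := by
  refine tendsto_atTop_mono' atTop ?_
    ((tendsto_atTop_add_const_right atTop (-1) tendsto_id).const_mul_atTop (hpos 1 one_pos))
  filter_upwards [eventually_ge_atTop 1] with x hx
  exact mul_sub_le_integral hcont hmono hpos one_pos hx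

end PrimitiveOfProfile

section RadialPotential

variable {E : Type*} [NormedAddCommGroup E]

/-- The radial potential `z ↦ ∫₀^{‖z‖} φ`, whose gradient is `radialField φ` when `φ` is continuous
and `φ 0 = 0`. -/
def radialPotential (φ : ℝ → ℝ) (z : E) : ℝ :=
  ∫ ξ in (0 : ℝ)..‖z‖, φ ξ

variable {φ : ℝ → ℝ}

@[simp]
theorem radialPotential_zero : radialPotential φ (0 : E) = 0 := by
  simp [radialPotential]

theorem radialPotential_pos (hcont : Continuous φ) (hpos : ∀ x, 0 < x → 0 < φ x) {z : E}
    (hz : z ≠ 0) : 0 < radialPotential φ z :=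
  intervalIntegral_pos_of_pos_on (hcont.intervalIntegrable _ _) (fun ξ hξ => hpos ξ hξ.1)
    (norm_pos_iff.2 hz)

theorem radialPotential_nonneg (hcont : Continuous φ) (hpos : ∀ x, 0 < x → 0 < φ x) (z : E) :
    0 ≤ radialPotential φ z := by
  rcases eq_or_ne z 0 with rfl | hz
  · exact radialPotential_zero.ge
  · exact (radialPotential_pos hcont hpos hz).le

theorem tendsto_radialPotential_cobounded (hcont : Continuous φ)
    (hmono : MonotoneOn φ (Set.Ici 0)) (hpos : ∀ x, 0 < x → 0 < φ x) :
    Tendsto (radialPotential φ : E → ℝ) (Bornology.cobounded E) atTop :=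
  (tendsto_integral_atTop_of_monotoneOn_of_pos hcont hmono hpos).comp tendsto_norm_cobounded_atTop

end RadialPotential

section RadialField

variable {E : Type*} [NormedAddCommGroup E] [NormedSpace ℝ E]

/-- The radial vector field `z ↦ φ(‖z‖) z / ‖z‖` with profile `φ`. At the origin the scalar is the
junk value `φ 0 / 0 = 0`, so the field vanishes there. -/
def radialField (φ : ℝ → ℝ) (z : E) : E :=
  (φ ‖z‖ / ‖z‖) • z

variable {φ : ℝ → ℝ}

@[simp]
theorem radialField_zero : radialField φ (0 : E) = 0 :=
  smul_zero _

theorem radialField_neg (z : E) : radialField φ (-z) = -radialField φ z := by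
  rw [radialField, radialField, norm_neg, smul_neg]

theorem norm_radialField (hzero : φ 0 = 0) (z : E) : ‖radialField φ z‖ = |φ ‖z‖| := by
  rcases eq_or_ne z 0 with rfl | hz
  · simp [hzero]
  · have hnorm : ‖z‖ ≠ 0 := norm_ne_zero_iff.2 hz
    rw [radialField, norm_smul, norm_div, norm_norm, div_mul_cancel₀ _ hnorm, norm_eq_abs]

theorem continuous_radialField (hcont : Continuous φ) (hzero : φ 0 = 0) :
    Continuous (radialField φ : E → E) := by
  refine continuous_iff_continuousAt.2 fun z => ?_
  have hprofile : Continuous fun z : E => φ ‖z‖ := hcont.comp continuous_norm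
  rcases eq_or_ne z 0 with rfl | hz
  · have hlim : Tendsto (fun z : E => |φ ‖z‖|) (nhds 0) (nhds 0) := by
      simpa [hzero] using hprofile.abs.tendsto 0
    rw [ContinuousAt, radialField_zero, tendsto_zero_iff_norm_tendsto_zero]
    simpa only [norm_radialField hzero] using hlim
  · exact (hprofile.continuousAt.div continuous_norm.continuousAt (norm_ne_zero_iff.2 hz)).smul
      continuousAt_id

end RadialField

section RadialGradient

variable {E : Type*} [NormedAddCommGroup E] [InnerProductSpace ℝ E] {φ : ℝ → ℝ}

theorem inner_radialField_self (z : E) : ⟪z, radialField φ z⟫ = φ ‖z‖ * ‖z‖ := by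
  rcases eq_or_ne z 0 with rfl | hz
  · simp
  · have hnorm : ‖z‖ ≠ 0 := norm_ne_zero_iff.2 hz
    rw [radialField, real_inner_smul_right, real_inner_self_eq_norm_sq]
    field_simp

theorem inner_sub_radialField_sub_nonneg (hzero : φ 0 = 0) (hmono : MonotoneOn φ (Set.Ici 0))
    (z w : E) : 0 ≤ ⟪z - w, radialField φ z - radialField φ w⟫ := by
  have inner_le (u v : E) : ⟪u, radialField φ v⟫ ≤ ‖u‖ * φ ‖v‖ := by
    have hnonneg : 0 ≤ φ ‖v‖ := hzero ▸ hmono Set.self_mem_Ici (norm_nonneg v) (norm_nonneg v)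
    simpa only [norm_radialField hzero, abs_of_nonneg hnonneg] using
      real_inner_le_norm u (radialField φ v)
  have hprofile : 0 ≤ (φ ‖z‖ - φ ‖w‖) * (‖z‖ - ‖w‖) := by
    rcases le_total ‖z‖ ‖w‖ with h | h
    · exact mul_nonneg_of_nonpos_of_nonpos
        (sub_nonpos.2 (hmono (norm_nonneg z) (norm_nonneg w) h)) (sub_nonpos.2 h)
    · exact mul_nonneg (sub_nonneg.2 (hmono (norm_nonneg w) (norm_nonneg z) h)) (sub_nonneg.2 h)
  calc 0 ≤ (φ ‖z‖ - φ ‖w‖) * (‖z‖ - ‖w‖) := hprofile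
    _ = φ ‖z‖ * ‖z‖ - ‖z‖ * φ ‖w‖ - (‖w‖ * φ ‖z‖ - φ ‖w‖ * ‖w‖) := by ring
    _ ≤ ⟪z, radialField φ z⟫ - ⟪z, radialField φ w⟫
        - (⟪w, radialField φ z⟫ - ⟪w, radialField φ w⟫) := by
      rw [inner_radialField_self, inner_radialField_self]
      gcongr <;> exact inner_le _ _
    _ = ⟪z - w, radialField φ z - radialField φ w⟫ := by
      rw [inner_sub_left, inner_sub_right, inner_sub_right]

theorem inner_radialField_sub_nonneg (hzero : φ 0 = 0) (hmono : MonotoneOn φ (Set.Ici 0))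
    (z y : E) : 0 ≤ ⟪y, radialField φ z - radialField φ (z - y)⟫ := by
  simpa only [sub_sub_cancel] using inner_sub_radialField_sub_nonneg hzero hmono z (z - y)

theorem hasFDerivAt_norm {z : E} (hz : z ≠ 0) :
    HasFDerivAt (fun w : E => ‖w‖) (‖z‖⁻¹ • innerSL ℝ z) z := by
  have hnorm : ‖z‖ ≠ 0 := norm_ne_zero_iff.2 hz
  have hsqrt := (hasStrictFDerivAt_norm_sq z).hasFDerivAt.sqrt (pow_ne_zero 2 hnorm)
  simp only [sqrt_sq (norm_nonneg _)] at hsqrt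
  refine hsqrt.congr_fderiv ?_
  rw [← Nat.cast_smul_eq_nsmul ℝ, smul_smul]
  congr 1
  push_cast
  field_simp

theorem hasFDerivAt_radialPotential (hcont : Continuous φ) (hzero : φ 0 = 0) (z : E) :
    HasFDerivAt (radialPotential φ) (innerSL ℝ (radialField φ z)) z := by
  have hprim (x : ℝ) : HasDerivAt (fun x => ∫ ξ in (0 : ℝ)..x, φ ξ) (φ x) x :=
    (hcont.integral_hasStrictDerivAt 0 x).hasDerivAt
  rcases eq_or_ne z 0 with rfl | hz
  · have hprimo : (fun x : ℝ => ∫ ξ in (0 : ℝ)..x, φ ξ) =o[nhds 0] fun x : ℝ => x := by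
      simpa [hasDerivAt_iff_isLittleO, hzero] using hprim 0
    have hpoto : (radialPotential φ : E → ℝ) =o[nhds 0] fun w : E => ‖w‖ :=
      hprimo.comp_tendsto tendsto_norm_zero
    simpa [hasFDerivAt_iff_isLittleO] using hpoto.of_norm_right
  · refine ((hprim ‖z‖).comp_hasFDerivAt z (hasFDerivAt_norm hz)).congr_fderiv ?_
    rw [radialField, map_smul, smul_smul, div_eq_mul_inv]

theorem contDiff_radialPotential (hcont : Continuous φ) (hzero : φ 0 = 0) :
    ContDiff ℝ 1 (radialPotential φ : E → ℝ) :=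
  contDiff_one_iff_hasFDerivAt.2 ⟨fun z => innerSL ℝ (radialField φ z),
    (innerSL ℝ).continuous.comp (continuous_radialField hcont hzero),
    hasFDerivAt_radialPotential hcont hzero⟩

end RadialGradient

section RadialLyapunov

variable {E : Type*} [NormedAddCommGroup E]

/-- The Lyapunov function `V₀` with an arbitrary profile `φ` in place of the modified saturation
function `S`, on an arbitrary normed group in place of `ℝ²`. -/
def radialLyapunov (φ : ℝ → ℝ) (z y : E) : ℝ :=
  ‖y‖ ^ 2 + radialPotential φ z + radialPotential φ (z - y)

variable {φ : ℝ → ℝ}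

theorem radialLyapunov_zero : radialLyapunov φ (0 : E) 0 = 0 := by
  simp [radialLyapunov]

theorem radialLyapunov_pos (hcont : Continuous φ) (hpos : ∀ x, 0 < x → 0 < φ x) {z y : E}
    (hzy : (z, y) ≠ (0, 0)) : 0 < radialLyapunov φ z y := by
  have hpot : 0 ≤ radialPotential φ (z - y) := radialPotential_nonneg hcont hpos _
  refine add_pos_of_pos_of_nonneg ?_ hpot
  rcases eq_or_ne y 0 with rfl | hy
  · have hz : z ≠ 0 := fun h => hzy (h ▸ rfl)
    exact add_pos_of_nonneg_of_pos (sq_nonneg _) (radialPotential_pos hcont hpos hz)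
  · exact add_pos_of_pos_of_nonneg (pow_pos (norm_pos_iff.2 hy) 2)
      (radialPotential_nonneg hcont hpos z)

theorem tendsto_radialLyapunov_cobounded (hcont : Continuous φ)
    (hmono : MonotoneOn φ (Set.Ici 0)) (hpos : ∀ x, 0 < x → 0 < φ x) :
    Tendsto (fun p : E × E => radialLyapunov φ p.1 p.2) (Bornology.cobounded (E × E)) atTop := by
  have hpot (w : E) : 0 ≤ radialPotential φ w := radialPotential_nonneg hcont hpos w
  have hnorm_sq : Tendsto (fun y : E => ‖y‖ ^ 2) (Bornology.cobounded E) atTop :=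
    (tendsto_pow_atTop two_ne_zero).comp tendsto_norm_cobounded_atTop
  rw [Bornology.cobounded_prod, Filter.coprod, tendsto_sup]
  constructor
  · refine tendsto_atTop_mono (fun p => ?_)
      ((tendsto_radialPotential_cobounded hcont hmono hpos).comp tendsto_comap)
    rw [radialLyapunov, add_assoc, add_left_comm]
    exact le_add_of_nonneg_right (add_nonneg (sq_nonneg _) (hpot _))
  · refine tendsto_atTop_mono (fun p => ?_) (hnorm_sq.comp tendsto_comap)
    rw [radialLyapunov, add_assoc]
    exact le_add_of_nonneg_right (add_nonneg (hpot _) (hpot _))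

theorem exists_forall_le_radialLyapunov (hcont : Continuous φ) (hmono : MonotoneOn φ (Set.Ici 0))
    (hpos : ∀ x, 0 < x → 0 < φ x) (M : ℝ) :
    ∃ r : ℝ, ∀ z y : E, r ≤ ‖(z, y)‖ → M ≤ radialLyapunov φ z y := by
  have hlarge := (tendsto_radialLyapunov_cobounded (E := E) hcont hmono hpos).eventually_ge_atTop M
  obtain ⟨r, -, hr⟩ := hasBasis_cobounded_norm.eventually_iff.1 hlarge
  exact ⟨r, fun z y hzy => hr hzy⟩

end RadialLyapunov

section LyapunovDerivative

variable {E : Type*} [NormedAddCommGroup E] [InnerProductSpace ℝ E] {φ : ℝ → ℝ}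

theorem contDiff_radialLyapunov (hcont : Continuous φ) (hzero : φ 0 = 0) :
    ContDiff ℝ 1 (fun p : E × E => radialLyapunov φ p.1 p.2) :=
  have hpot := contDiff_radialPotential (E := E) hcont hzero
  ((contDiff_snd.norm_sq ℝ).add (hpot.comp contDiff_fst)).add
    (hpot.comp (contDiff_fst.sub contDiff_snd))

theorem hasDerivAt_radialLyapunov_comp (hcont : Continuous φ) (hzero : φ 0 = 0) {z y : ℝ → E}
    {z' y' : E} {t : ℝ} (hz : HasDerivAt z z' t) (hy : HasDerivAt y y' t) :
    HasDerivAt (fun s => radialLyapunov φ (z s) (y s))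
      (2 * ⟪y t, y'⟫ + ⟪radialField φ (z t), z'⟫ + ⟪radialField φ (z t - y t), z' - y'⟫) t :=
  have hpot := hasFDerivAt_radialPotential (E := E) hcont hzero
  (hy.norm_sq.add ((hpot (z t)).comp_hasDerivAt t hz)).add
    ((hpot (z t - y t)).comp_hasDerivAt_of_eq t (hz.fun_sub hy) rfl)

/-- The derivative of `radialLyapunov φ` at the state `(z, y)` along the system
`ż = y - radialField φ z`, `ẏ = -radialField φ z`. -/
def radialLyapunovDeriv (φ : ℝ → ℝ) (z y : E) : ℝ :=
  -(φ ‖z‖) ^ 2 - ⟪y, radialField φ z - radialField φ (z - y)⟫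

theorem hasDerivAt_radialLyapunov_of_solution (hcont : Continuous φ) (hzero : φ 0 = 0)
    {z y : ℝ → E} {t : ℝ} (hz : HasDerivAt z (y t - radialField φ (z t)) t)
    (hy : HasDerivAt y (-radialField φ (z t)) t) :
    HasDerivAt (fun s => radialLyapunov φ (z s) (y s)) (radialLyapunovDeriv φ (z t) (y t)) t := by
  refine (hasDerivAt_radialLyapunov_comp hcont hzero hz hy).congr_deriv ?_
  have hnorm : ⟪radialField φ (z t), radialField φ (z t)⟫ = φ ‖z t‖ ^ 2 := by
    rw [real_inner_self_eq_norm_sq, norm_radialField hzero, sq_abs]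
  rw [radialLyapunovDeriv, sub_neg_eq_add, sub_add_cancel, inner_neg_right, inner_sub_right,
    inner_sub_right, hnorm, real_inner_comm (y t) (radialField φ (z t)),
    real_inner_comm (y t) (radialField φ (z t - y t))]
  ring

theorem radialLyapunovDeriv_nonpos (hzero : φ 0 = 0) (hmono : MonotoneOn φ (Set.Ici 0))
    (z y : E) : radialLyapunovDeriv φ z y ≤ 0 := by
  rw [radialLyapunovDeriv]
  linarith [sq_nonneg (φ ‖z‖), inner_radialField_sub_nonneg hzero hmono z y]

theorem eq_zero_of_radialLyapunovDeriv_eq_zero (hzero : φ 0 = 0)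
    (hmono : MonotoneOn φ (Set.Ici 0)) (hpos : ∀ x, 0 < x → 0 < φ x) {z y : E}
    (h : radialLyapunovDeriv φ z y = 0) : z = 0 ∧ y = 0 := by
  have eq_zero_of_profile {w : E} (hw : φ ‖w‖ = 0) : w = 0 := by
    by_contra hne
    exact (hpos _ (norm_pos_iff.2 hne)).ne' hw
  rw [radialLyapunovDeriv] at h
  have hsq : φ ‖z‖ ^ 2 = 0 := by
    linarith [sq_nonneg (φ ‖z‖), inner_radialField_sub_nonneg hzero hmono z y]
  obtain rfl : z = 0 := eq_zero_of_profile (sq_eq_zero_iff.1 hsq)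
  have hcross : φ ‖y‖ * ‖y‖ = 0 := by
    rw [← inner_radialField_self]
    simpa [radialField_neg, hzero] using h
  exact ⟨rfl, (mul_eq_zero.1 hcross).elim eq_zero_of_profile norm_eq_zero.1⟩

end LyapunovDerivative

theorem stmt9_general {E : Type*} [NormedAddCommGroup E] [InnerProductSpace ℝ E] {φ : ℝ → ℝ}
    (hcont : Continuous φ) (hzero : φ 0 = 0) (hmono : MonotoneOn φ (Set.Ici 0))
    (hpos : ∀ x, 0 < x → 0 < φ x) :
    ContDiff ℝ 1 (fun p : E × E => radialLyapunov φ p.1 p.2) ∧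
    radialLyapunov φ (0 : E) 0 = 0 ∧
    (∀ z y : E, (z, y) ≠ (0, 0) → 0 < radialLyapunov φ z y) ∧
    (∀ M : ℝ, ∃ r : ℝ, ∀ z y : E, r ≤ ‖(z, y)‖ → M ≤ radialLyapunov φ z y) ∧
    (∀ (z y : ℝ → E) (t : ℝ), HasDerivAt z (y t - radialField φ (z t)) t →
      HasDerivAt y (-radialField φ (z t)) t →
      HasDerivAt (fun s => radialLyapunov φ (z s) (y s))
        (-(φ ‖z t‖) ^ 2 - ⟪y t, radialField φ (z t) - radialField φ (z t - y t)⟫) t ∧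
      (-(φ ‖z t‖) ^ 2 - ⟪y t, radialField φ (z t) - radialField φ (z t - y t)⟫ ≤ 0) ∧
      ((-(φ ‖z t‖) ^ 2 - ⟪y t, radialField φ (z t) - radialField φ (z t - y t)⟫ = 0) →
        z t = 0 ∧ y t = 0)) :=
  ⟨contDiff_radialLyapunov hcont hzero, radialLyapunov_zero,
    fun _ _ => radialLyapunov_pos hcont hpos, exists_forall_le_radialLyapunov hcont hmono hpos,
    fun z y t hz hy => ⟨hasDerivAt_radialLyapunov_of_solution hcont hzero hz hy,
      radialLyapunovDeriv_nonpos hzero hmono (z t) (y t),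
      eq_zero_of_radialLyapunovDeriv_eq_zero hzero hmono hpos⟩⟩

theorem fvec_eq_radialField (σ : ℝ → ℝ) : fvec σ = radialField (modSat σ) := by
  funext z
  rw [fvec]
  split_ifs with hz
  · rw [hz, radialField_zero]
  · rfl

/-- `V₀` is `C¹`, positive definite, radially unbounded, and is a strict Lyapunov function
for `(T₀)`: along solutions, `dV₀/dt = -S(‖z‖)² - ⟨y, f(z) - f(z-y)⟩ ≤ 0`, vanishing only
at the origin. -/
theorem stmt9 (σ : ℝ → ℝ) (hσ : IsSaturation σ) :
    ContDiff ℝ 1 (fun p : E2 × E2 => V0 σ p.1 p.2) ∧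
    V0 σ 0 0 = 0 ∧
    (∀ z y : E2, (z, y) ≠ (0, 0) → 0 < V0 σ z y) ∧
    (∀ M : ℝ, ∃ r : ℝ, ∀ z y : E2, r ≤ ‖(z, y)‖ → M ≤ V0 σ z y) ∧
    (∀ z y : ℝ → E2, IsSolT0 σ z y → ∀ t : ℝ, 0 ≤ t →
      HasDerivAt (fun s => V0 σ (z s) (y s))
        (-(modSat σ ‖z t‖) ^ 2 - ⟪y t, fvec σ (z t) - fvec σ (z t - y t)⟫) t ∧
      (-(modSat σ ‖z t‖) ^ 2 - ⟪y t, fvec σ (z t) - fvec σ (z t - y t)⟫ ≤ 0) ∧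
      ((-(modSat σ ‖z t‖) ^ 2 - ⟪y t, fvec σ (z t) - fvec σ (z t - y t)⟫ = 0) →
        z t = 0 ∧ y t = 0)) := by
  obtain ⟨hodd, ⟨L, hLip⟩, hsign, -, -, hmono, -, -⟩ := hσ
  have hcont : Continuous σ := hLip.continuous
  have hzero : σ 0 = 0 := Function.Odd.map_zero hodd
  have hpos (ξ : ℝ) (hξ : 0 < ξ) : 0 < σ ξ := pos_of_mul_pos_left (hsign ξ hξ.ne') hξ.le
  obtain ⟨hC1, hV0, hVpos, hVlarge, hVderiv⟩ :=
    stmt9_general (E := E2) (continuous_modSat hcont) (modSat_zero hzero)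
      ((monotone_modSat hcont hmono).monotoneOn _) fun _ => modSat_pos hcont hpos
  simp only [IsSolT0, fvec_eq_radialField]
  exact ⟨hC1, hV0, hVpos, hVlarge, fun z y hsol t ht =>
    hVderiv z y t (hsol t ht).1 (hsol t ht).2⟩
end
end
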